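/- Let ν ≥ 0, μ ≥ 0, and let u, B : ℝ × ℝ³ → ℝ³ and P : ℝ × ℝ³ → ℝ be smooth (jointly in (t,x)), horizontally periodic in x for each t, satisfying at every (t,x) ∈ ℝ × ℝ³ the viscous MHD system: ∂ₜu − νΔu + (curl u) × u + B × (curl B) + ∇P = 0, div u = 0, ∂ₜB − μΔB = curl(u × B), div B = 0. Assume for every t that u(t,·) satisfies the Navier-slip boundary condition (u₃ = ∂₃u₁ = ∂₃u₂ = 0 on ∂Ω) and B(t,·) satisfies the insulating boundary condition (B₁ = B₂ = 0 on ∂Ω). Then the energy E(t) = ∫_Q (|u(t,x)|² + |B(t,x)|²) dx is differentiable in t and satisfies, for every t, E′(t) = −2ν ∫_Q |curl u(t,x)|² dx − 2μ ∫_Q |curl B(t,x)|² dx. -/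

import Mathlib

noncomputable section

open MeasureTheory

/-- Points/vectors in ℝ³, indexed by `Fin 3` (so index `0,1,2` stand for coordinates `1,2,3`). -/
abbrev V3 : Type := Fin 3 → ℝ

/-- Partial derivative in the `i`-th coordinate direction. -/
def pd (i : Fin 3) (f : V3 → ℝ) (x : V3) : ℝ := fderiv ℝ f x (Pi.single i 1)

/-- Divergence of a vector field. -/
def vdiv (u : V3 → V3) (x : V3) : ℝ :=
  pd 0 (fun y => u y 0) x + pd 1 (fun y => u y 1) x + pd 2 (fun y => u y 2) x

/-- Curl of a vector field. -/
def vcurl (u : V3 → V3) (x : V3) : V3 :=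
  ![pd 1 (fun y => u y 2) x - pd 2 (fun y => u y 1) x,
    pd 2 (fun y => u y 0) x - pd 0 (fun y => u y 2) x,
    pd 0 (fun y => u y 1) x - pd 1 (fun y => u y 0) x]

/-- Laplacian of a scalar function. -/
def lap (f : V3 → ℝ) (x : V3) : ℝ :=
  pd 0 (pd 0 f) x + pd 1 (pd 1 f) x + pd 2 (pd 2 f) x

/-- Componentwise Laplacian of a vector field. -/
def vlap (u : V3 → V3) (x : V3) : V3 := fun i => lap (fun y => u y i) x

/-- Advective derivative `(u·∇)V`. -/
def adv (u V : V3 → V3) (x : V3) : V3 := fun i =>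
  u x 0 * pd 0 (fun y => V y i) x + u x 1 * pd 1 (fun y => V y i) x +
    u x 2 * pd 2 (fun y => V y i) x

/-- Cross product in ℝ³. -/
def cross (a b : V3) : V3 :=
  ![a 1 * b 2 - a 2 * b 1, a 2 * b 0 - a 0 * b 2, a 0 * b 1 - a 1 * b 0]

/-- Dot product in ℝ³. -/
def dot (a b : V3) : ℝ := a 0 * b 0 + a 1 * b 1 + a 2 * b 2

/-- Gradient of a scalar function. -/
def grad (f : V3 → ℝ) (x : V3) : V3 := fun i => pd i f x

/-- The boundary `∂Ω = {x : x₃ = 0 or x₃ = 1}`. -/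
def onBdry (x : V3) : Prop := x 2 = 0 ∨ x 2 = 1

/-- Horizontal periodicity (period 1 in x₁ and x₂) of a scalar function. -/
def hperS (f : V3 → ℝ) : Prop :=
  (∀ x, f (x + Pi.single 0 1) = f x) ∧ (∀ x, f (x + Pi.single 1 1) = f x)

/-- Horizontal periodicity (period 1 in x₁ and x₂) of a vector field. -/
def hperV (u : V3 → V3) : Prop :=
  (∀ x, u (x + Pi.single 0 1) = u x) ∧ (∀ x, u (x + Pi.single 1 1) = u x)

/-- The unit cube `Q = [0,1]³`. -/
def Q3 : Set V3 := Set.Icc 0 1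

/-- smooth -/
abbrev Sm {E F : Type*} [NormedAddCommGroup E] [NormedSpace ℝ E] [NormedAddCommGroup F]
    [NormedSpace ℝ F] (f : E → F) : Prop := ContDiff ℝ (⊤ : ℕ∞) f

lemma Sm.dat {E F : Type*} [NormedAddCommGroup E] [NormedSpace ℝ E] [NormedAddCommGroup F]
    [NormedSpace ℝ F] {f : E → F} (h : Sm f) (x : E) : DifferentiableAt ℝ f x :=
  (ContDiff.differentiable h (by simp)) x

lemma Sm.comp_i {E : Type*} [NormedAddCommGroup E] [NormedSpace ℝ E] {u : E → V3}
    (h : Sm u) (i : Fin 3) : Sm (fun y => u y i) := contDiff_pi.1 h i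

lemma Sm.pd {f : V3 → ℝ} (h : Sm f) (i : Fin 3) : Sm (pd i f) := by
  have : Sm (fderiv ℝ f) := ContDiff.fderiv_right h (by simp)
  exact ContDiff.clm_apply this contDiff_const

lemma pd_add {f g : V3 → ℝ} {x : V3} (i : Fin 3) (hf : DifferentiableAt ℝ f x)
    (hg : DifferentiableAt ℝ g x) : pd i (fun y => f y + g y) x = pd i f x + pd i g x := by
  unfold pd; rw [fderiv_fun_add hf hg]; rfl

lemma pd_sub {f g : V3 → ℝ} {x : V3} (i : Fin 3) (hf : DifferentiableAt ℝ f x)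
    (hg : DifferentiableAt ℝ g x) : pd i (fun y => f y - g y) x = pd i f x - pd i g x := by
  unfold pd; rw [fderiv_fun_sub hf hg]; rfl

lemma pd_mul {f g : V3 → ℝ} {x : V3} (i : Fin 3) (hf : DifferentiableAt ℝ f x)
    (hg : DifferentiableAt ℝ g x) :
    pd i (fun y => f y * g y) x = f x * pd i g x + pd i f x * g x := by
  unfold pd; rw [fderiv_fun_mul hf hg]; simp; ring

lemma pd_cmul {g : V3 → ℝ} {x : V3} (i : Fin 3) (c : ℝ)
    (hg : DifferentiableAt ℝ g x) : pd i (fun y => c * g y) x = c * pd i g x := by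
  unfold pd; rw [fderiv_const_mul hg]; simp

lemma pd_comm {f : V3 → ℝ} (hf : Sm f) (i j : Fin 3) (x : V3) :
    pd i (pd j f) x = pd j (pd i f) x := by
  have h2 : Sm (fderiv ℝ f) := ContDiff.fderiv_right hf (by simp)
  have key : ∀ a b : Fin 3, pd a (pd b f) x =
      fderiv ℝ (fderiv ℝ f) x (Pi.single a 1) (Pi.single b 1) := by
    intro a b
    have : pd b f = fun y => fderiv ℝ f y (Pi.single b 1) := rfl
    rw [this]
    unfold pd
    rw [fderiv_clm_apply (h2.dat x) (differentiableAt_const _)]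
    simp
  rw [key, key]
  have hs : IsSymmSndFDerivAt ℝ f x :=
    (ContDiff.contDiffAt hf).isSymmSndFDerivAt (by simp; exact WithTop.coe_le_coe.2 (le_top : (2:ℕ∞) ≤ ⊤))
  exact hs _ _

lemma pd_per {f : V3 → ℝ} {v : V3} (h : ∀ x, f (x + v) = f x) (i : Fin 3) (x : V3) :
    pd i f (x + v) = pd i f x := by
  unfold pd
  rw [← fderiv_comp_add_right]
  congr 2
  funext y; exact h y

lemma Sm.curl {u : V3 → V3} (h : Sm u) : Sm (vcurl u) := by
  refine contDiff_pi.2 fun i => ?_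
  have := fun a b => (h.comp_i a).pd b
  fin_cases i
  · exact (this 2 1).sub (this 1 2)
  · exact (this 0 2).sub (this 2 0)
  · exact (this 1 0).sub (this 0 1)

lemma Sm.cross {u v : V3 → V3} (h : Sm u) (k : Sm v) : Sm (fun y => cross (u y) (v y)) := by
  refine contDiff_pi.2 fun i => ?_
  have a := fun i => h.comp_i i
  have b := fun i => k.comp_i i
  fin_cases i
  · exact ((a 1).mul (b 2)).sub ((a 2).mul (b 1))
  · exact ((a 2).mul (b 0)).sub ((a 0).mul (b 2))
  · exact ((a 0).mul (b 1)).sub ((a 1).mul (b 0))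

lemma Sm.dot {E : Type*} [NormedAddCommGroup E] [NormedSpace ℝ E] {u v : E → V3}
    (h : Sm u) (k : Sm v) : Sm (fun y => dot (u y) (v y)) := by
  have a := fun i => h.comp_i i
  have b := fun i => k.comp_i i
  exact (((a 0).mul (b 0)).add ((a 1).mul (b 1))).add ((a 2).mul (b 2))

lemma vdiv_cross {u v : V3 → V3} (h : Sm u) (k : Sm v) (x : V3) :
    vdiv (fun y => cross (u y) (v y)) x = dot (v x) (vcurl u x) - dot (u x) (vcurl v x) := by
  have a := fun i => (h.comp_i i).dat x
  have b := fun i => (k.comp_i i).dat x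
  have e : ∀ l i j p q : Fin 3, pd l (fun y => u y i * v y j - u y p * v y q) x =
      u x i * pd l (fun y => v y j) x + pd l (fun y => u y i) x * v x j
      - (u x p * pd l (fun y => v y q) x + pd l (fun y => u y p) x * v x q) := by
    intro l i j p q
    rw [pd_sub l ((a i).fun_mul (b j)) ((a p).fun_mul (b q)), pd_mul l (a i) (b j), pd_mul l (a p) (b q)]
  simp only [vdiv, cross, dot, vcurl, Matrix.cons_val]
  rw [e, e, e]
  ring

lemma curl_curl {u : V3 → V3} (h : Sm u) (hd : ∀ x, vdiv u x = 0) (x : V3) (i : Fin 3) :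
    vcurl (vcurl u) x i = - vlap u x i := by
  have a := fun i j => ((h.comp_i i).pd j).dat x
  have e : ∀ l i j p q : Fin 3, pd l (fun y => pd i (fun z => u z j) y - pd p (fun z => u z q) y) x
      = pd l (pd i (fun z => u z j)) x - pd l (pd p (fun z => u z q)) x := by
    intro l i j p q
    exact pd_sub l (a j i) (a q p)
  have c := fun i p q => pd_comm (h.comp_i i) p q x
  have d : ∀ l, pd l (pd 0 (fun z => u z 0)) x + pd l (pd 1 (fun z => u z 1)) x
      + pd l (pd 2 (fun z => u z 2)) x = 0 := by
    intro l
    have h0 : vdiv u = fun _ => 0 := funext hd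
    have h1 : pd l (vdiv u) x = 0 := by rw [h0]; simp [pd]
    rw [← h1]
    unfold vdiv
    rw [pd_add l ((a 0 0).fun_add (a 1 1)) (a 2 2), pd_add l (a 0 0) (a 1 1)]
  fin_cases i
  all_goals simp only [vcurl, vlap, lap, Matrix.cons_val, Fin.zero_eta, Fin.mk_one, Fin.reduceFinMk]
  all_goals rw [e, e]
  · linear_combination d 0 + c 1 1 0 + c 2 2 0
  · linear_combination d 1 + c 0 0 1 + c 2 2 1
  · linear_combination d 2 + c 0 0 2 + c 1 1 2

lemma u_lap {u : V3 → V3} (h : Sm u) (hd : ∀ x, vdiv u x = 0) (x : V3) :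
    dot (u x) (vlap u x) = - dot (vcurl u x) (vcurl u x)
      - vdiv (fun y => cross (vcurl u y) (u y)) x := by
  rw [vdiv_cross h.curl h]
  have := fun i => curl_curl h hd x i
  simp only [dot]
  rw [this, this, this]; ring

lemma vdiv_smul {p : V3 → ℝ} {u : V3 → V3} (hp : Sm p) (h : Sm u) (x : V3) :
    vdiv (fun y i => p y * u y i) x = p x * vdiv u x + dot (u x) (grad p x) := by
  have a := fun i => (h.comp_i i).dat x
  simp only [vdiv, dot, grad]
  rw [pd_mul _ (hp.dat x) (a 0), pd_mul _ (hp.dat x) (a 1), pd_mul _ (hp.dat x) (a 2)]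
  ring

lemma vdiv_lin {F G H K : V3 → V3} (hF : Sm F) (hG : Sm G) (hH : Sm H) (hK : Sm K)
    (a b c d : ℝ) (x : V3) :
    vdiv (fun y i => a * F y i + b * G y i + c * H y i + d * K y i) x =
      a * vdiv F x + b * vdiv G x + c * vdiv H x + d * vdiv K x := by
  have e : ∀ l i, pd l (fun y => a * F y i + b * G y i + c * H y i + d * K y i) x =
      a * pd l (fun y => F y i) x + b * pd l (fun y => G y i) x + c * pd l (fun y => H y i) x
      + d * pd l (fun y => K y i) x := by
    intro l i
    have f := (hF.comp_i i).dat x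
    have g := (hG.comp_i i).dat x
    have h := (hH.comp_i i).dat x
    have k := (hK.comp_i i).dat x
    rw [pd_add l (((f.const_mul a).fun_add (g.const_mul b)).fun_add (h.const_mul c)) (k.const_mul d),
      pd_add l ((f.const_mul a).fun_add (g.const_mul b)) (h.const_mul c),
      pd_add l (f.const_mul a) (g.const_mul b), pd_cmul _ _ f, pd_cmul _ _ g, pd_cmul _ _ h,
      pd_cmul _ _ k]
  simp only [vdiv]
  rw [e, e, e]; ring

lemma insert_one (i : Fin 3) (x : Fin 2 → ℝ) :
    (i.insertNth (1:ℝ) x : V3) = i.insertNth (0:ℝ) x + Pi.single i 1 := by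
  funext j
  rcases eq_or_ne j i with rfl | h
  · simp
  · obtain ⟨k, rfl⟩ := Fin.exists_succAbove_eq h
    simp

lemma int_div {F : V3 → V3} (hF : Sm F) (hper : hperV F) (hb : ∀ x, onBdry x → F x 2 = 0) :
    ∫ x in Q3, vdiv F x = 0 := by
  have hi := fun i => (hF.comp_i i)
  have hv : ∀ x, vdiv F x = ∑ i : Fin 3, fderiv ℝ (fun y => F y i) x (Pi.single i 1) := by
    intro x; rw [Fin.sum_univ_three]; rfl
  have hc : Continuous (vdiv F) := by
    unfold vdiv
    exact ((((hi 0).pd 0).continuous.add ((hi 1).pd 1).continuous).add ((hi 2).pd 2).continuous)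
  have key := integral_divergence_of_hasFDerivAt_off_countable' (n := 2) (E := ℝ) 0 1
    (by intro i; simp) (fun i x => F x i) (fun i x => fderiv ℝ (fun y => F y i) x) ∅
    Set.countable_empty (fun i => (hi i).continuous.continuousOn)
    (fun x _ i => ((hi i).dat x).hasFDerivAt)
    (by
      have : (fun x => ∑ i : Fin 3, fderiv ℝ (fun y => F y i) x (Pi.single i 1)) = vdiv F :=
        funext fun x => (hv x).symm
      rw [this]
      exact hc.continuousOn.integrableOn_compact isCompact_Icc)
  simp_rw [hv]
  refine key.trans ?_
  apply Finset.sum_eq_zero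
  intro i _
  rw [sub_eq_zero]
  congr 1
  funext x
  show F (i.insertNth (1:ℝ) x) i = F (i.insertNth (0:ℝ) x) i
  fin_cases i
  · exact congrFun (by rw [insert_one]; exact hper.1 _) _
  · exact congrFun (by rw [insert_one]; exact hper.2 _) _
  · refine (hb _ (Or.inr ?_)).trans (hb _ (Or.inl ?_)).symm
    · exact Fin.insertNth_apply_same (α := fun _ => ℝ) (2 : Fin 3) 1 x
    · exact Fin.insertNth_apply_same (α := fun _ => ℝ) (2 : Fin 3) 0 x

lemma diff_int {g : ℝ → V3 → ℝ} (hg : Sm (Function.uncurry g)) (t : ℝ) :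
    HasDerivAt (fun s => ∫ x in Q3, g s x) (∫ x in Q3, deriv (fun s => g s x) t) t := by
  have hd : ∀ s x, HasDerivAt (fun s => g s x) (fderiv ℝ (Function.uncurry g) (s, x) (1, 0)) s := by
    intro s x
    have h1 := (hg.dat (s, x)).hasFDerivAt
    have h2 : HasDerivAt (fun s : ℝ => (s, x)) ((1 : ℝ), (0 : V3)) s :=
      (hasDerivAt_id s).prodMk (hasDerivAt_const s x)
    exact h1.comp_hasDerivAt s h2
  have hc : Continuous (fun q : ℝ × V3 => fderiv ℝ (Function.uncurry g) q (1, 0)) :=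
    (hg.continuous_fderiv (by simp)).clm_apply continuous_const
  obtain ⟨C, hC⟩ := ((isCompact_Icc (a := t - 1) (b := t + 1)).prod
    (isCompact_Icc (a := (0 : V3)) (b := 1))).exists_bound_of_continuousOn hc.continuousOn
  have hgs : ∀ s, Continuous (g s) := fun s =>
    (hg.continuous.comp (Continuous.prodMk continuous_const continuous_id) :)
  have hm : MeasurableSet Q3 := measurableSet_Icc
  have := (hasDerivAt_integral_of_dominated_loc_of_deriv_le (μ := volume.restrict Q3)
    (F := g) (F' := fun s x => fderiv ℝ (Function.uncurry g) (s, x) (1, 0))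
    (x₀ := t) (s := Set.Icc (t-1) (t+1)) (bound := fun _ => C)
    (Icc_mem_nhds (by linarith) (by linarith))
    (Filter.Eventually.of_forall fun s => (hgs s).aestronglyMeasurable)
    ((hgs t).continuousOn.integrableOn_compact isCompact_Icc)
    ((hc.comp (Continuous.prodMk continuous_const continuous_id)).aestronglyMeasurable)
    ((ae_restrict_iff' hm).2 (Filter.Eventually.of_forall fun x hx s hs => hC (s, x) ⟨hs, hx⟩))
    (by
      have : IsFiniteMeasure (volume.restrict Q3) :=
        ⟨by rw [Measure.restrict_apply_univ]; exact isCompact_Icc.measure_lt_top⟩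
      exact integrable_const C)
    (Filter.Eventually.of_forall fun x s _ => hd s x)).2
  have e : (fun x => deriv (fun s => g s x) t) =
      fun x => fderiv ℝ (Function.uncurry g) (t, x) (1, 0) := funext fun x => (hd t x).deriv
  rw [e]
  exact this

lemma sm_slice {F : Type*} [NormedAddCommGroup F] [NormedSpace ℝ F] {u : ℝ → V3 → F}
    (h : Sm (Function.uncurry u)) (t : ℝ) : Sm (u t) :=
  (ContDiff.comp h (contDiff_const.prodMk contDiff_id) :)

lemma sm_time {F : Type*} [NormedAddCommGroup F] [NormedSpace ℝ F] {u : ℝ → V3 → F}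
    (h : Sm (Function.uncurry u)) (x : V3) : Sm (fun s => u s x) :=
  (ContDiff.comp h (contDiff_id.prodMk contDiff_const) :)

lemma deriv_dot {u : ℝ → V3} (h : Sm u) (t : ℝ) :
    HasDerivAt (fun s => dot (u s) (u s)) (2 * dot (u t) (fun i => deriv (fun s => u s i) t)) t := by
  have a := fun i => ((h.comp_i i).dat t).hasDerivAt
  have := (((a 0).mul (a 0)).add ((a 1).mul (a 1))).add ((a 2).mul (a 2))
  refine this.congr_deriv ?_
  simp only [dot]; ring

lemma vcurl_per {u : V3 → V3} {v : V3} (h : ∀ x, u (x + v) = u x) (x : V3) :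
    vcurl u (x + v) = vcurl u x := by
  have := fun i j => pd_per (f := fun y => u y i) (v := v) (fun x => congrFun (h x) i) j x
  simp only [vcurl, this]

lemma pd_tangent {f : V3 → ℝ} (hf : Sm f) (hb : ∀ x, onBdry x → f x = 0) (i : Fin 3) (hi : i ≠ 2)
    (x : V3) (hx : onBdry x) : pd i f x = 0 := by
  have h1 : HasDerivAt (fun s : ℝ => x + s • (Pi.single i 1 : V3)) (Pi.single i 1) 0 := by
    simpa using ((hasDerivAt_id (0:ℝ)).smul_const (Pi.single i 1 : V3)).const_add x
  have h2 : HasFDerivAt f (fderiv ℝ f x) (x + (0:ℝ) • (Pi.single i 1 : V3)) := by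
    simpa using (hf.dat x).hasFDerivAt
  have h3 := h2.comp_hasDerivAt 0 h1
  have h4 : (f ∘ fun s : ℝ => x + s • (Pi.single i 1 : V3)) = fun _ => 0 := by
    funext s
    apply hb
    simpa [onBdry, Pi.single_apply, hi.symm] using hx
  rw [h4] at h3
  exact h3.unique (hasDerivAt_const _ _)

/-- Energy identity: for a smooth horizontally periodic solution `(u,B,P)` of the viscous
MHD system with the Navier-slip b.c. for `u` and the insulating b.c. for `B`, the energy
`E(t) = ∫_Q (|u|² + |B|²)` is differentiable with
`E′(t) = −2ν∫_Q |curl u|² − 2μ∫_Q |curl B|²`. -/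
theorem stmt_16 (nu mu : ℝ) (hnu : 0 ≤ nu) (hmu : 0 ≤ mu)
    (u B : ℝ → V3 → V3) (P : ℝ → V3 → ℝ)
    (hu : ContDiff ℝ (⊤ : ℕ∞) (Function.uncurry u))
    (hB : ContDiff ℝ (⊤ : ℕ∞) (Function.uncurry B))
    (hP : ContDiff ℝ (⊤ : ℕ∞) (Function.uncurry P))
    (huper : ∀ t, hperV (u t)) (hBper : ∀ t, hperV (B t)) (hPper : ∀ t, hperS (P t))
    (hmom : ∀ t x (i : Fin 3),
      deriv (fun s => u s x i) t - nu * vlap (u t) x i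
        + cross (vcurl (u t) x) (u t x) i + cross (B t x) (vcurl (B t) x) i
        + grad (P t) x i = 0)
    (hdivu : ∀ t x, vdiv (u t) x = 0)
    (hind : ∀ t x (i : Fin 3),
      deriv (fun s => B s x i) t - mu * vlap (B t) x i
        = vcurl (fun y => cross (u t y) (B t y)) x i)
    (hdivB : ∀ t x, vdiv (B t) x = 0)
    (hubc : ∀ t x, onBdry x →
      u t x 2 = 0 ∧ pd 2 (fun y => u t y 0) x = 0 ∧ pd 2 (fun y => u t y 1) x = 0)
    (hBbc : ∀ t x, onBdry x → B t x 0 = 0 ∧ B t x 1 = 0) :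
    ∀ t : ℝ, HasDerivAt
      (fun s => ∫ x in Q3, (dot (u s x) (u s x) + dot (B s x) (B s x)))
      (-2 * nu * (∫ x in Q3, dot (vcurl (u t) x) (vcurl (u t) x))
        - 2 * mu * (∫ x in Q3, dot (vcurl (B t) x) (vcurl (B t) x))) t := by
  intro t
  have su := sm_slice hu t
  have sB := sm_slice hB t
  have sP := sm_slice hP t
  have hE := diff_int (g := fun s x => dot (u s x) (u s x) + dot (B s x) (B s x))
    (ContDiff.add (Sm.dot hu hu) (Sm.dot hB hB)) t
  refine hE.congr_deriv ?_
  have sX := Sm.cross su sB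
  have s1 := Sm.cross su.curl su
  have s2 := Sm.cross sB.curl sB
  have s3 := Sm.cross sX sB
  have s4 : Sm (fun y i => P t y * u t y i) :=
    contDiff_pi.2 fun i => ContDiff.mul sP (su.comp_i i)
  have hpt : ∀ x, deriv (fun s => dot (u s x) (u s x) + dot (B s x) (B s x)) t =
      vdiv (fun y i => (-2 * nu) * cross (vcurl (u t) y) (u t y) i
        + (-2 * mu) * cross (vcurl (B t) y) (B t y) i
        + 2 * cross (cross (u t y) (B t y)) (B t y) i
        + (-2) * (P t y * u t y i)) x
      + ((-2 * nu) * dot (vcurl (u t) x) (vcurl (u t) x)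
        + (-2 * mu) * dot (vcurl (B t) x) (vcurl (B t) x)) := by
    intro x
    rw [((deriv_dot (sm_time hu x) t).fun_add (deriv_dot (sm_time hB x) t)).deriv,
      vdiv_lin s1 s2 s3 s4, vdiv_smul sP su, hdivu, vdiv_cross sX sB]
    have e1 := u_lap su (hdivu t) x
    have e2 := u_lap sB (hdivB t) x
    have m := hmom t x
    have n := hind t x
    have m0 := m 0
    have m1 := m 1
    have m2 := m 2
    have n0 := n 0
    have n1 := n 1
    have n2 := n 2
    generalize vdiv (fun y => cross (vcurl (u t) y) (u t y)) x = d1 at *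
    generalize vdiv (fun y => cross (vcurl (B t) y) (B t y)) x = d2 at *
    generalize vcurl (fun y => cross (u t y) (B t y)) x = cc at *
    generalize vcurl (u t) x = w at *
    generalize vcurl (B t) x = J at *
    simp only [dot, cross, Matrix.cons_val] at *
    linear_combination 2 * u t x 0 * m0 + 2 * u t x 1 * m1 + 2 * u t x 2 * m2
      + 2 * B t x 0 * n0 + 2 * B t x 1 * n1 + 2 * B t x 2 * n2 + 2 * nu * e1 + 2 * mu * e2
  simp_rw [hpt]
  have hc : ∀ v : V3 → V3, Sm v → IntegrableOn (fun x => dot (v x) (v x)) Q3 := fun v hv =>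
    (Sm.dot hv hv).continuous.continuousOn.integrableOn_compact isCompact_Icc
  have iu := (hc _ su.curl).const_mul (-2 * nu)
  have iB := (hc _ sB.curl).const_mul (-2 * mu)
  have sF : Sm (fun y i => (-2 * nu) * cross (vcurl (u t) y) (u t y) i
        + (-2 * mu) * cross (vcurl (B t) y) (B t y) i
        + 2 * cross (cross (u t y) (B t y)) (B t y) i
        + (-2) * (P t y * u t y i)) := by
    refine contDiff_pi.2 fun i => ?_
    exact ((((contDiff_const.mul (s1.comp_i i)).add (contDiff_const.mul (s2.comp_i i))).add
      (contDiff_const.mul (s3.comp_i i))).add (contDiff_const.mul (s4.comp_i i)))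
  have iF : IntegrableOn (vdiv (fun y i => (-2 * nu) * cross (vcurl (u t) y) (u t y) i
        + (-2 * mu) * cross (vcurl (B t) y) (B t y) i
        + 2 * cross (cross (u t y) (B t y)) (B t y) i
        + (-2) * (P t y * u t y i))) Q3 := by
    refine ContinuousOn.integrableOn_compact isCompact_Icc (Continuous.continuousOn ?_)
    exact ((((sF.comp_i 0).pd 0).continuous.add ((sF.comp_i 1).pd 1).continuous).add
      ((sF.comp_i 2).pd 2).continuous)
  have zF := int_div sF ?_ ?_
  · have iuB : Integrable (fun x => (-2 * nu) * dot (vcurl (u t) x) (vcurl (u t) x)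
        + (-2 * mu) * dot (vcurl (B t) x) (vcurl (B t) x)) (volume.restrict Q3) := iu.add iB
    rw [integral_add iF iuB, zF, integral_add iu iB, integral_const_mul,
      integral_const_mul]
    ring
  · constructor
    · intro x
      simp only [vcurl_per (huper t).1, vcurl_per (hBper t).1, (huper t).1, (hBper t).1,
        (hPper t).1]
    · intro x
      simp only [vcurl_per (huper t).2, vcurl_per (hBper t).2, (huper t).2, (hBper t).2,
        (hPper t).2]
  · intro x hx
    obtain ⟨b0, b1⟩ := hBbc t x hx
    obtain ⟨u2, d0, d1⟩ := hubc t x hx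
    have p0 := pd_tangent (su.comp_i 2) (fun x hx => (hubc t x hx).1) 0 (by decide) x hx
    have p1 := pd_tangent (su.comp_i 2) (fun x hx => (hubc t x hx).1) 1 (by decide) x hx
    simp only [cross, vcurl, Matrix.cons_val, b0, b1, u2, d0, d1, p0, p1]
    ring
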